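/- The eigenvalue -4 of the 19×19 ternary search tree urn matrix A has algebraic multiplicity 4 but geometric multiplicity 3 (the kernel of A + 4I has dimension 3); hence A is not diagonalisable. -/

import Mathlib

open Polynomial

/-- The 19×19 replacement matrix of the Pólya urn for protected nodes in ternary
search trees. -/
def Atern : Matrix (Fin 19) (Fin 19) ℚ :=
  !![-9, 2, 0, 0, 0, 0, 0, 0, 0, 0, 0, 0, 0, 0, 0, 0, 0, 0, 0;
     0, -8, 4, 1, 0, 0, 0, 0, 0, 0, 0, 0, 0, 0, 0, 0, 0, 0, 0;
     0, 0, -7, 0, 6, 0, 1, 0, 0, 0, 0, 0, 0, 0, 0, 0, 0, 0, 0;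
     0, 0, 0, -7, 0, 0, 2, 0, 0, 0, 0, 0, 0, 0, 0, 0, 0, 0, 0;
     0, 0, 0, 0, -6, 0, 0, 0, 1, 0, 0, 0, 0, 0, 0, 0, 0, 0, 0;
     9, 0, 0, 0, 0, -6, 0, 2, 0, 0, 0, 0, 0, 0, 0, 0, 0, 0, 0;
     0, 0, 0, 0, 0, 0, -6, 0, 4, 2, 0, 0, 0, 0, 0, 0, 0, 0, 0;
     0, 6, 0, 0, 0, 0, 0, -5, 0, 0, 4, 1, 0, 0, 0, 0, 0, 0, 0;
     0, 0, 0, 0, 0, 0, 0, 0, -5, 0, 0, 0, 2, 0, 0, 0, 0, 0, 0;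
     0, 0, 0, 0, 0, 0, 0, 0, 0, -5, 0, 0, 2, 0, 0, 0, 0, 0, 0;
     0, 0, 3, 0, 0, 0, 0, 0, 0, 0, -4, 0, 0, 0, 1, 0, 0, 0, 0;
     0, 0, 0, 6, 0, 0, 0, 0, 0, 0, 0, -4, 0, 0, 2, 0, 0, 0, 0;
     9, 6, 3, 6, 0, 6, 3, 3, 0, 3, 0, 3, -4, 3, 0, 0, 0, 0, 0;
     0, 0, 0, 0, 0, 6, 0, 0, 0, 0, 0, 0, 0, -3, 0, 2, 0, 0, 0;
     0, 0, 0, 0, 0, 0, 3, 0, 0, 0, 0, 0, 0, 0, -3, 0, 2, 0, 0;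
     0, 0, 0, 0, 0, 0, 0, 3, 0, 0, 0, 0, 0, 0, 0, -2, 0, 1, 0;
     0, 0, 0, 0, 0, 0, 0, 0, 0, 3, 0, 0, 0, 0, 0, 0, -2, 0, 0;
     0, 0, 0, 0, 0, 0, 0, 0, 0, 0, 0, 3, 0, 0, 0, 0, 0, -1, 0;
     0, 0, 0, 0, 0, 0, 0, 0, 0, 0, 0, 0, 0, 3, 0, 0, 0, 0, 0]

/-- Columns: a Jordan basis of `Atern`. -/
def PJ : Matrix (Fin 19) (Fin 19) ℚ :=
  !![-2, 0, -120, 214, -1, -2, -1, -4, 8, 2, 0, 5, 4, 0, 9, 1, 0, 0, 1;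
     -5, 0, -300, 475, 0, -1, -1, -4, 12, 3, 0, 10, 8, 0, 27, 3, 0, 0, 5;
     -4, 0, -240, 320, 0, 0, -1, -1, 6, -3, 0, 7, 5, 0, 27, 3, 0, 0, 9;
     -4, 0, -240, 320, 0, 0, 3, 0, 0, 18, 0, 2, 4, 0, 27, 3, 0, 0, 9;
     -1, 0, -60, 60, 0, 0, 0, 0, 1, -2, 0, 2, 1, 0, 9, 1, 0, 0, 6;
     9, 1, 1260, -1033, 3, 7, 1, 16, -9, 0, 1, -9, -6, 2, -25, 9, 1, 0, 7;
     -6, 0, -360, 360, 0, 0, 0, 0, 0, 9, 0, 2, 4, 0, 54, 6, 0, 0, 36;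
     18, 1, 1800, -1366, 0, 2, 4, 10, -36, -9, 0, -27, -21, 1, -78, 9, 2, 0, 20;
     -2, 0, -120, 60, 0, 0, 0, 0, 0, 0, 0, 2, 1, 0, 27, 3, 0, 0, 42;
     -2, 0, -120, 60, 0, 0, 0, 0, 0, 0, 0, -3, 0, 0, 27, 3, 0, 0, 42;
     12, 1, 600, -504, 0, 0, 1, 1, -9, 9, 0, -15, -9, 0, -53, 0, 1, 0, 15;
     0, -3, 1200, -400, 0, 0, -6, 0, 0, -45, 0, 0, -12, 0, -106, 0, 2, 0, 30;
     -1, 0, -60, -30, 0, 0, 0, 0, 0, 0, 0, 0, 0, 0, 27, 3, 0, 0, 126;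
     0, 0, -3360, 840, -3, -8, 0, -21, 0, 0, -2, 0, 0, -5, 0, -53, -6, 0, 28;
     12, 0, 720, -360, 0, 0, 0, 0, 0, -9, 0, -6, -6, 0, -134, -9, 2, 0, 48;
     -27, -3, -2100, 999, 0, -1, -3, -6, 27, 0, 0, 27, 18, -1, 75, -27, -6, 0, 35;
     3, 0, 180, 0, 0, 0, 0, 0, 0, 0, 0, 3, 0, 0, -81, -9, 1, 0, 42;
     0, 3, -1200, 0, 0, 0, 3, 0, 0, 27, 0, 0, 9, 0, 159, 0, -6, 0, 45;
     0, 0, 2520, 0, 1, 3, 0, 9, 0, 0, 1, 0, 0, 3, 0, 53, 9, 1, 84]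

/-- The inverse of `PJ`. -/
def QJ : Matrix (Fin 19) (Fin 19) ℚ :=
  !![-189/25, -63/25, 807/350, -1054/175, 2421/350, -126/25, -97/175, 0, 47/10, -47/10, 1689/350, -1201/350, 21/25, -63/25, 713/350, 63/25, -713/350, -21/25, 0;
     72/5, 24/5, -118/35, 402/35, -354/35, 48/5, 1/35, 0, -10, 10, -286/35, 229/35, -8/5, 24/5, -172/35, -24/5, 172/35, 8/5, 0;
     3/20, 2/25, 19/1400, 43/420, -69/1400, 1/10, 53/2100, 3/100, -29/600, 7/120, -51/1400, 43/840, -11/300, 1/20, -109/4200, -1/50, 1/168, 0, 0;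
     -9/50, -3/50, 3/50, -7/50, 9/50, -3/25, -1/50, 0, 1/10, -1/10, 3/25, -2/25, 1/50, -3/50, 1/25, 3/50, -1/25, -1/50, 0;
     -109/25, 2/25, -112/25, -82/25, 224/25, -56/25, 29/25, -4/5, -17/5, -11/5, 16/25, -29/25, 56/25, -28/25, 7/25, 8/25, -2/25, -1/25, 0;
     21/2, 29/6, 31/6, 49/6, -31/2, 7, -1/2, 7/3, 35/6, 35/6, -7/3, 11/3, -35/6, 7/2, -1, -7/6, 1/3, 1/6, 0;
     15/4, 2, 1/4, 35/12, -3/2, 5/2, 1/6, 3/4, 5/12, 25/12, -1, 4/3, -5/3, 5/4, -5/12, -1/2, 1/6, 1/12, 0;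
     -15, -8, -2, -32/3, 12, -10, -5/3, -3, -8/3, -22/3, 4, -16/3, 20/3, -5, 5/3, 2, -2/3, -1/3, 0;
     -10, -5, 0, -7, 6, -20/3, -16/9, -5/3, 10/9, -40/9, 10/3, -11/3, 10/3, -10/3, 4/3, 5/3, -2/3, -1/3, 0;
     -20/7, -10/7, 0, -2, 10/7, -40/21, -29/63, -10/21, 26/63, -86/63, 20/21, -22/21, 20/21, -20/21, 8/21, 10/21, -4/21, -2/21, 0;
     363, 177, 0, 255, -195, 241, 60, 58, -45, 165, -116, 133, -120, 120, -50, -60, 25, 12, 0;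
     -6, -8/3, 2/3, -13/3, 4, -4, -1, -2/3, 7/3, -3, 8/3, -7/3, 4/3, -2, 1, 4/3, -2/3, -1/3, 0;
     30, 40/3, -10/3, 65/3, -20, 20, 5, 10/3, -32/3, 14, -40/3, 35/3, -20/3, 10, -5, -20/3, 10/3, 5/3, 0;
     -252, -110, 26, -184, 156, -168, -39, -27, 91, -119, 108, -99, 56, -84, 45, 56, -30, -14, 0;
     -45/106, 0, 45/106, -45/106, 45/53, -15/53, -1/53, 15/106, 41/106, -41/106, 30/53, -15/53, 0, -15/106, 13/106, 15/53, -13/53, -15/106, 0;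
     123/53, 0, -123/53, 123/53, -246/53, 82/53, 9/53, -41/53, -105/53, 105/53, -164/53, 82/53, 0, 41/53, -32/53, -82/53, 64/53, 41/53, 0;
     0, 1, 2, -1, 3, 0, 0, 1, 1, -1, 2, -1, 0, 0, 0, 1, -1, -1, 0;
     -1/2, -1/2, -1/2, -1/2, -1/2, 0, -1/2, 0, -1/2, -1/2, 0, 0, -1/2, 1/2, 0, 1/2, 0, 1/2, 1;
     3/700, 2/525, 1/300, 1/300, 1/350, 1/350, 1/350, 1/420, 1/420, 1/420, 1/525, 1/525, 1/525, 1/700, 1/700, 1/1050, 1/1050, 1/2100, 0]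

/-- Eigenvalues of `Atern` with multiplicity. -/
def evJ : Fin 19 → ℚ := ![-4, -4, -4, -4, -9, -8, -7, -7, -6, -6, -6, -5, -5, -5, -3, -3, -2, 0, 1]

/-- The Jordan form of `Atern`. -/
def JJ : Matrix (Fin 19) (Fin 19) ℚ := Matrix.of fun i j =>
  if i = j then evJ i else if i = 2 ∧ j = 3 then 1 else 0

/-- The permutation matrix exchanging 2 and 3. -/
def SJ : Matrix (Fin 19) (Fin 19) ℚ := Matrix.of fun i j => if j = Equiv.swap 2 3 i then 1 else 0

/-- `JJ + 4 = diagonal wJ * SJ`. -/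
def wJ : Fin 19 → ℚ := fun i => if i = 2 then 1 else evJ i + 4

/-- A generalised eigenvector of rank two. -/
def vJ : Fin 19 → ℚ := fun i => PJ i 3

theorem PQ_one : PJ * QJ = 1 := by decide +kernel

theorem AP_PJ : Atern * PJ = PJ * JJ := by decide +kernel

theorem J_wS : JJ + (4 : ℚ) • 1 = Matrix.diagonal wJ * SJ := by decide +kernel

theorem SS_one : SJ * SJ = 1 := by decide +kernel

theorem v_ker2 : (Atern + (4 : ℚ) • 1).mulVec ((Atern + (4 : ℚ) • 1).mulVec vJ) = 0 := by
  decide +kernel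

theorem v_ker1 : (Atern + (4 : ℚ) • 1).mulVec vJ ≠ 0 := by decide +kernel

theorem QP_one : QJ * PJ = 1 := mul_eq_one_comm.mp PQ_one

theorem A_eq : Atern = PJ * JJ * QJ := by
  rw [← AP_PJ, mul_assoc, PQ_one, mul_one]

theorem J_upper : JJ.BlockTriangular id := by
  intro i j h
  simp only [id] at h
  have h1 : i ≠ j := h.ne'
  have h2 : ¬ (i = 2 ∧ j = 3) := by
    rintro ⟨rfl, rfl⟩
    exact absurd h (by decide)
  simp [JJ, h1, h2]

/-- The cofactor of `(X + 4) ^ 4` in the characteristic polynomial. -/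
noncomputable def restJ : ℚ[X] := ∏ i : Fin 15, (X - C (evJ (Fin.natAdd 4 i)))

theorem charpoly_A : Atern.charpoly = (X + 4) ^ 4 * restJ := by
  have h1 : Atern.charpoly = JJ.charpoly := by
    rw [A_eq, Matrix.charpoly_mul_comm, ← mul_assoc, QP_one, one_mul]
  rw [h1, Matrix.charpoly_of_isUpperTriangular _ J_upper]
  have h2 : ∀ i, JJ i i = evJ i := fun i => by simp [JJ]
  simp only [h2]
  have h3 := Fin.prod_univ_add (a := 4) (b := 15) (fun i : Fin 19 => (X - C (evJ i) : ℚ[X]))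
  refine h3.trans ?_
  have h4 : ∀ i : Fin 4, evJ (Fin.castAdd 15 i) = -4 := by decide +kernel
  have h5 : (X - C (-4) : ℚ[X]) = X + 4 := by
    rw [C_neg, sub_neg_eq_add]; rfl
  simp only [h4, h5, restJ, Finset.prod_const, Finset.card_univ, Fintype.card_fin]

theorem X4_ne : (X + 4 : ℚ[X]) ≠ 0 := by
  intro h
  have h1 := congrArg (eval 0) h
  simp at h1

theorem rest_ne : restJ.eval (-4) ≠ 0 := by
  rw [restJ, eval_prod, Finset.prod_ne_zero_iff]
  intro i _
  have h : ∀ i : Fin 15, (-4 : ℚ) - evJ (Fin.natAdd 4 i) ≠ 0 := by decide +kernel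
  simpa using h i

theorem A4_eq : Atern + (4 : ℚ) • 1 = PJ * Matrix.diagonal wJ * (SJ * QJ) := by
  have : PJ * (JJ + (4 : ℚ) • 1) * QJ = Atern + (4 : ℚ) • 1 := by
    rw [mul_add, add_mul, ← A_eq, Matrix.mul_smul, Matrix.smul_mul, mul_one, PQ_one]
  rw [← this, J_wS]
  simp only [mul_assoc]

theorem rank_A4 : (Atern + (4 : ℚ) • 1).rank = 16 := by
  have hP : IsUnit PJ.det := by
    rw [← Matrix.isUnit_iff_isUnit_det]
    exact ⟨⟨PJ, QJ, PQ_one, QP_one⟩, rfl⟩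
  have hS : IsUnit (SJ * QJ).det := by
    rw [← Matrix.isUnit_iff_isUnit_det]
    exact (IsUnit.mul ⟨⟨SJ, SJ, SS_one, SS_one⟩, rfl⟩ ⟨⟨QJ, PJ, QP_one, PQ_one⟩, rfl⟩)
  rw [A4_eq, Matrix.rank_mul_eq_left_of_isUnit_det _ _ hS,
    Matrix.rank_mul_eq_right_of_isUnit_det _ _ hP, Matrix.rank_diagonal]
  decide +kernel

/-- The eigenvalue `-4` of `Atern` has algebraic multiplicity 4 but geometric
multiplicity 3; hence `Atern` is not diagonalisable. -/
theorem Atern_not_diagonalisable :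
    ((X + 4) ^ 4 ∣ Atern.charpoly ∧ ¬ (X + 4) ^ 5 ∣ Atern.charpoly) ∧
    Module.finrank ℚ (LinearMap.ker (Atern + (4 : ℚ) • 1).mulVecLin) = 3 ∧
    ¬ ∃ (P D : Matrix (Fin 19) (Fin 19) ℚ),
        IsUnit P.det ∧ D.IsDiag ∧ Atern = P * D * P⁻¹ := by
  refine ⟨⟨?_, ?_⟩, ?_, ?_⟩
  · rw [charpoly_A]
    exact dvd_mul_right _ _
  · rintro ⟨q, hq⟩
    rw [charpoly_A, pow_succ (X + 4 : ℚ[X]) 4, mul_assoc] at hq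
    have h4 : (X + 4 : ℚ[X]) ^ 4 ≠ 0 := pow_ne_zero _ X4_ne
    have h := mul_left_cancel₀ h4 hq
    apply rest_ne
    rw [h]
    simp
  · have h := LinearMap.finrank_range_add_finrank_ker (Atern + (4 : ℚ) • 1).mulVecLin
    have hr := rank_A4
    rw [Matrix.rank] at hr
    rw [hr, Module.finrank_fin_fun] at h
    omega
  · rintro ⟨P, D, hP, hD, hA⟩
    have e : Atern + (4 : ℚ) • 1 = P * (D + (4 : ℚ) • 1) * P⁻¹ := by
      rw [mul_add, add_mul, ← hA, Matrix.mul_smul, Matrix.smul_mul, mul_one,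
        Matrix.mul_nonsing_inv _ hP]
    obtain ⟨d, rfl⟩ : ∃ d, Matrix.diagonal d = D := ⟨_, hD.diagonal_diag⟩
    have e2 : Matrix.diagonal d + (4 : ℚ) • 1 = Matrix.diagonal (fun i => d i + 4) := by
      ext i j
      by_cases hij : i = j
      · subst hij; simp
      · simp [hij]
    rw [e2] at e
    have k2 := v_ker2
    apply v_ker1
    rw [e] at k2 ⊢
    have k3 := congrArg (P⁻¹.mulVec ·) k2
    simp only [Matrix.mulVec_mulVec, Matrix.mulVec_zero] at k3
    have e3 : P⁻¹ * (P * Matrix.diagonal (fun i => d i + 4) * P⁻¹ *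
        (P * Matrix.diagonal (fun i => d i + 4) * P⁻¹)) =
        Matrix.diagonal (fun i => d i + 4) * (Matrix.diagonal (fun i => d i + 4) * P⁻¹) := by
      simp only [mul_assoc, Matrix.nonsing_inv_mul_cancel_left _ _ hP]
    rw [e3, ← Matrix.mulVec_mulVec, ← Matrix.mulVec_mulVec] at k3
    rw [mul_assoc, ← Matrix.mulVec_mulVec, ← Matrix.mulVec_mulVec]
    suffices hz : (Matrix.diagonal (fun i => d i + 4)).mulVec (P⁻¹.mulVec vJ) = 0 by
      rw [hz, Matrix.mulVec_zero]
    funext i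
    have k4 := congrFun k3 i
    simp only [Matrix.mulVec_diagonal, Pi.zero_apply, mul_eq_zero] at k4 ⊢
    tauto
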